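/- Suppose G is a primitive group of permutations of an infinite set Ω and α ∈ Ω. Then the cardinalities of the orbits of the point stabilizer G_α on Ω are bounded above by a finite cardinal if and only if G_α is a finite group. -/

import Mathlib

/-- A group `G` acts primitively on `Ω` if it acts transitively and the only
`G`-invariant equivalence relations on `Ω` are the universal and the trivial ones. -/
def IsPrimitive (G Ω : Type*) [Group G] [MulAction G Ω] : Prop :=
  MulAction.IsPretransitive G Ω ∧
    ∀ r : Ω → Ω → Prop, Equivalence r →
      (∀ (g : G) (x y : Ω), r x y → r (g • x) (g • y)) →
      (∀ x y : Ω, r x y) ∨ (∀ x y : Ω, r x y → x = y)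

/-!
By Schlichting's argument, a point stabilizer `K` of a transitive action with bounded suborbits is
commensurable with a normal subgroup `N`. Indeed, among the subgroups `H` containing a finite-index
subgroup of `K`, choose one whose orbits have the least bound `m`. A finite intersection `J` of
conjugates of `H` is again of this kind, so it has an orbit `J β` of the maximal length `m`; then
all the conjugates involved have `J β` as an orbit, and so does the group they generate. The latter
therefore meets the stabilizer of `β` in a subgroup of index at most `m`, which bounds all its
orbits uniformly in the number of conjugates. Hence the normal closure `N` of `H` has finite orbits.

If moreover every normal subgroup is transitive or acts trivially, then either `N` is trivial and
`K`, being commensurable with it, is finite, or `Ω` is a finite orbit of `N`.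
-/

open MulAction Subgroup
open scoped Pointwise

section Orbits

variable {G Ω : Type*} [Group G] [MulAction G Ω]

theorem orbit_subset_orbit_of_le {H K : Subgroup G} (h : H ≤ K) (β : Ω) :
    orbit H β ⊆ orbit K β := by
  rintro _ ⟨g, rfl⟩
  exact ⟨⟨g, h g.2⟩, rfl⟩

theorem le_stabilizer_orbit (H : Subgroup G) (β : Ω) : H ≤ stabilizer G (orbit H β) :=
  fun h hh ↦ smul_orbit (⟨h, hh⟩ : H) β

theorem orbit_subset_of_le_stabilizer {H : Subgroup G} {B : Set Ω} (h : H ≤ stabilizer G B)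
    {β : Ω} (hβ : β ∈ B) : orbit H β ⊆ B := by
  rintro _ ⟨g, rfl⟩
  rw [← mem_stabilizer_iff.1 (h g.2)]
  exact Set.smul_mem_smul_set hβ

theorem orbit_conj_smul (H : Subgroup G) (g : G) (β : Ω) :
    orbit ↥(MulAut.conj g • H) β = g • orbit H (g⁻¹ • β) := by
  ext γ
  rw [Set.mem_smul_set_iff_inv_smul_mem]
  constructor
  · rintro ⟨⟨_, h, hh, rfl⟩, rfl⟩
    exact ⟨⟨h, hh⟩, by simp [Subgroup.smul_def, mul_smul]⟩
  · rintro ⟨h, hγ⟩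
    refine ⟨⟨_, smul_mem_pointwise_smul _ (MulAut.conj g) H h.2⟩, ?_⟩
    rw [eq_inv_smul_iff] at hγ
    simpa [Subgroup.smul_def, mul_smul] using hγ

theorem relIndex_stabilizer_ne_zero_iff {H : Subgroup G} {β : Ω} :
    (stabilizer G β).relIndex H ≠ 0 ↔ (orbit H β).Finite := by
  have hindex : (stabilizer G β).relIndex H = (orbit H β).ncard := index_stabilizer H β
  rw [hindex]
  exact ⟨Set.finite_of_ncard_ne_zero, (Set.ncard_ne_zero_of_mem (mem_orbit_self β) ·)⟩

theorem encard_orbit_le_card {M X : Type*} [SMul M X] (x : X) :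
    (orbit M x).encard ≤ ENat.card M := by
  rw [orbit, ← Set.image_univ, ← Set.encard_univ]
  exact Set.encard_image_le _ _

theorem encard_orbit_le_encard_orbit_mul (L : Subgroup G) (α β : Ω) :
    (orbit L α).encard ≤ (orbit L β).encard * (orbit (stabilizer G β) α).encard := by
  choose! transporter htransporter using fun γ (hγ : γ ∈ orbit L β) ↦ hγ
  have hsub : orbit L α ⊆
      (fun p : Ω × Ω ↦ transporter p.1 • p.2) '' orbit L β ×ˢ orbit (stabilizer G β) α := by
    rintro _ ⟨x, rfl⟩
    set t := transporter (x • β)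
    have ht : t • β = x • β := htransporter (x • β) (mem_orbit β x)
    have hstab : (t⁻¹ * x : L) • β = β := by rw [mul_smul, inv_smul_eq_iff, ht]
    exact ⟨(x • β, t⁻¹ • x • α),
      ⟨mem_orbit β x, ⟨⟨(t⁻¹ * x : L), hstab⟩, mul_smul t⁻¹ x α⟩⟩, smul_inv_smul t (x • α)⟩
  rw [← Set.encard_prod]
  exact (Set.encard_le_encard hsub).trans (Set.encard_image_le _ _)

theorem encard_orbit_iSup_le {ι : Type*} {H : ι → Subgroup G} {α : Ω} {b : ℕ∞}
    (h : ∀ E : Finset ι, (orbit ↥(⨆ i ∈ E, H i) α).encard ≤ b) :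
    (orbit ↥(⨆ i, H i) α).encard ≤ b := by
  classical
  obtain rfl | hb := eq_or_ne b ⊤
  · exact le_top
  let length (E : Finset ι) : ℕ∞ := (orbit ↥(⨆ i ∈ E, H i) α).encard
  have hlt : ⨆ E, length E < ⊤ := (iSup_le h).trans_lt hb.lt_top
  obtain ⟨E, hE⟩ := ENat.exists_eq_iSup_of_lt_top hlt
  have hstab (i : ι) : H i ≤ stabilizer G (orbit ↥(⨆ j ∈ E, H j) α) := by
    have hsub : orbit ↥(⨆ j ∈ E, H j) α ⊆ orbit ↥(⨆ j ∈ insert i E, H j) α :=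
      orbit_subset_orbit_of_le (biSup_mono fun _ ↦ Finset.mem_insert_of_mem) α
    have hle : length (insert i E) ≤ length E := hE ▸ le_iSup length (insert i E)
    have hfin : (orbit ↥(⨆ j ∈ insert i E, H j) α).Finite :=
      Set.encard_lt_top_iff.1 ((h _).trans_lt hb.lt_top)
    rw [hfin.eq_of_subset_of_encard_le' hsub hle]
    exact le_trans (le_iSup₂_of_le i (Finset.mem_insert_self i E) le_rfl)
      (le_stabilizer_orbit _ α)
  exact (Set.encard_le_encard (orbit_subset_of_le_stabilizer (iSup_le hstab)
    (mem_orbit_self α))).trans (h E)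

end Orbits

section SupOrbitLength

/-- The supremum of the lengths of the orbits of `H` on `Ω`. It is `⊤` both if some orbit is
infinite and if the orbits are finite of unbounded length. -/
noncomputable def supOrbitLength {G : Type*} [Group G] (H : Subgroup G) (Ω : Type*)
    [MulAction G Ω] : ℕ∞ :=
  ⨆ β : Ω, (orbit H β).encard

variable {G Ω : Type*} [Group G] [MulAction G Ω]

theorem encard_orbit_le_supOrbitLength (H : Subgroup G) (β : Ω) :
    (orbit H β).encard ≤ supOrbitLength H Ω :=
  le_iSup (fun γ : Ω ↦ (orbit H γ).encard) β

theorem finite_orbit_of_supOrbitLength_lt_top {H : Subgroup G} (h : supOrbitLength H Ω < ⊤)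
    (β : Ω) : (orbit H β).Finite :=
  Set.encard_lt_top_iff.1 ((encard_orbit_le_supOrbitLength H β).trans_lt h)

theorem supOrbitLength_mono {H K : Subgroup G} (h : H ≤ K) :
    supOrbitLength H Ω ≤ supOrbitLength K Ω :=
  iSup_mono fun β ↦ Set.encard_le_encard (orbit_subset_orbit_of_le h β)

theorem supOrbitLength_conj_smul (H : Subgroup G) (g : G) :
    supOrbitLength (MulAut.conj g • H) Ω = supOrbitLength H Ω := by
  simp only [supOrbitLength, orbit_conj_smul, Set.encard_smul_set]
  exact (MulAction.toPerm g⁻¹).iSup_comp (g := fun β : Ω ↦ (orbit H β).encard)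

theorem supOrbitLength_stabilizer_eq [IsPretransitive G Ω] (α β : Ω) :
    supOrbitLength (stabilizer G β) Ω = supOrbitLength (stabilizer G α) Ω := by
  obtain ⟨g, rfl⟩ := exists_smul_eq G α β
  rw [stabilizer_smul_eq_stabilizer_map_conj]
  exact supOrbitLength_conj_smul _ g

theorem exists_orbit_iSup_subset_orbit [Nonempty Ω] {ι : Sort*} {H : ι → Subgroup G}
    {J : Subgroup G} (hJ : ∀ i, J ≤ H i) (hfin : supOrbitLength J Ω < ⊤)
    (hle : ∀ i, supOrbitLength (H i) Ω ≤ supOrbitLength J Ω) :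
    ∃ β : Ω, orbit ↥(⨆ i, H i) β ⊆ orbit J β := by
  obtain ⟨β, hβ⟩ := ENat.exists_eq_iSup_of_lt_top hfin
  refine ⟨β, orbit_subset_of_le_stabilizer (iSup_le fun i ↦ ?_) (mem_orbit_self β)⟩
  have heq : orbit J β = orbit (H i) β :=
    (finite_orbit_of_supOrbitLength_lt_top hfin β).eq_of_subset_of_encard_le
      (orbit_subset_orbit_of_le (hJ i) β)
      (((encard_orbit_le_supOrbitLength (H i) β).trans (hle i)).trans hβ.ge)
  rw [heq]
  exact le_stabilizer_orbit (H i) β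

end SupOrbitLength

section Schlichting

variable {G Ω : Type*} [Group G] [MulAction G Ω]

theorem normalClosure_le_iSup_conj_smul (H : Subgroup G) :
    normalClosure (H : Set G) ≤ ⨆ g : G, MulAut.conj g • H := by
  refine (closure_le _).2 fun x hx ↦ ?_
  obtain ⟨h, hh, hconj⟩ := Group.mem_conjugatesOfSet_iff.1 hx
  obtain ⟨g, rfl⟩ := isConj_iff.1 hconj
  exact mem_iSup_of_mem g (smul_mem_pointwise_smul h (MulAut.conj g) H hh)

theorem relIndex_conj_smul_stabilizer_ne_zero {α : Ω}
    (hfin : ∀ β : Ω, (orbit (stabilizer G α) β).Finite) {H : Subgroup G}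
    (hH : H.relIndex (stabilizer G α) ≠ 0) (g : G) :
    (MulAut.conj g • H).relIndex (stabilizer G α) ≠ 0 := by
  have hconj : (MulAut.conj g • H).relIndex (stabilizer G (g • α)) ≠ 0 := by
    rw [stabilizer_smul_eq_stabilizer_map_conj]
    exact (relIndex_pointwise_smul (MulAut.conj g) H (stabilizer G α)).trans_ne hH
  exact relIndex_ne_zero_trans hconj (relIndex_stabilizer_ne_zero_iff.2 (hfin (g • α)))

-- The factor `H` in the minimality hypothesis is there for `E = ∅`, where the infimum is `⊤`.
theorem encard_orbit_normalClosure_le [IsPretransitive G Ω] {H : Subgroup G}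
    (hfin : supOrbitLength H Ω < ⊤)
    (hmin : ∀ E : Finset G, supOrbitLength H Ω ≤
      supOrbitLength (H ⊓ ⨅ g : E, MulAut.conj (g : G) • H) Ω) (α : Ω) :
    (orbit (normalClosure (H : Set G)) α).encard ≤
      supOrbitLength H Ω * supOrbitLength (stabilizer G α) Ω := by
  have : Nonempty Ω := ⟨α⟩
  refine (Set.encard_le_encard
    (orbit_subset_orbit_of_le (normalClosure_le_iSup_conj_smul H) α)).trans
    (encard_orbit_iSup_le fun E ↦ ?_)
  rw [iSup_subtype']
  let J : Subgroup G := H ⊓ ⨅ g : E, MulAut.conj (g : G) • H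
  have hJH : supOrbitLength J Ω ≤ supOrbitLength H Ω := supOrbitLength_mono inf_le_left
  obtain ⟨β, hβ⟩ := exists_orbit_iSup_subset_orbit (J := J) (Ω := Ω)
    (H := fun g : E ↦ MulAut.conj (g : G) • H) (fun g ↦ inf_le_right.trans (iInf_le _ g))
    (hJH.trans_lt hfin) (fun g ↦ (supOrbitLength_conj_smul H (g : G)).trans_le (hmin E))
  calc (orbit ↥(⨆ g : E, MulAut.conj (g : G) • H) α).encard
      ≤ (orbit ↥(⨆ g : E, MulAut.conj (g : G) • H) β).encard *
          (orbit (stabilizer G β) α).encard := encard_orbit_le_encard_orbit_mul _ α β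
    _ ≤ supOrbitLength H Ω * supOrbitLength (stabilizer G β) Ω :=
        mul_le_mul' (((Set.encard_le_encard hβ).trans (encard_orbit_le_supOrbitLength J β)).trans
          hJH) (encard_orbit_le_supOrbitLength _ α)
    _ = supOrbitLength H Ω * supOrbitLength (stabilizer G α) Ω := by
        rw [supOrbitLength_stabilizer_eq α β]

/-- **Schlichting's theorem**, phrased for the transitive action of `G` on `Ω`. -/
theorem exists_normal_commensurable_stabilizer [IsPretransitive G Ω] {α : Ω}
    (hK : supOrbitLength (stabilizer G α) Ω < ⊤) :
    ∃ N : Subgroup G, N.Normal ∧ Commensurable N (stabilizer G α) := by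
  obtain ⟨H, hHK, hmin⟩ := exists_minimalFor_of_wellFoundedLT
    (fun H : Subgroup G ↦ H.relIndex (stabilizer G α) ≠ 0) (supOrbitLength · Ω)
    ⟨stabilizer G α, relIndex_self (stabilizer G α) ▸ one_ne_zero⟩
  have hle {J : Subgroup G} (hJ : J.relIndex (stabilizer G α) ≠ 0) :
      supOrbitLength H Ω ≤ supOrbitLength J Ω := (le_total _ _).elim id (hmin hJ)
  have hHfin : supOrbitLength H Ω < ⊤ :=
    (hle (relIndex_self (stabilizer G α) ▸ one_ne_zero)).trans_lt hK
  have hconj (E : Finset G) :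
      (H ⊓ ⨅ g : E, MulAut.conj (g : G) • H).relIndex (stabilizer G α) ≠ 0 :=
    relIndex_inf_ne_zero hHK (relIndex_iInf_ne_zero fun g ↦
      relIndex_conj_smul_stabilizer_ne_zero (finite_orbit_of_supOrbitLength_lt_top hK) hHK g)
  have horbit : (orbit (normalClosure (H : Set G)) α).Finite :=
    Set.encard_lt_top_iff.1 <|
      (encard_orbit_normalClosure_le hHfin (fun E ↦ hle (hconj E)) α).trans_lt
        (WithTop.mul_lt_top hHfin hK)
  exact ⟨normalClosure (H : Set G), normalClosure_normal,
    mt (relIndex_eq_zero_of_le_left le_normalClosure) hHK,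
    relIndex_stabilizer_ne_zero_iff.2 horbit⟩

end Schlichting

theorem eq_bot_of_fixedPoints_eq_univ {G Ω : Type*} [Group G] [MulAction G Ω] [FaithfulSMul G Ω]
    {N : Subgroup G} (h : fixedPoints N Ω = Set.univ) : N = ⊥ :=
  N.eq_bot_iff_forall.2 fun g hg ↦ eq_of_smul_eq_smul fun β : Ω ↦
    ((Set.eq_univ_iff_forall.1 h β) ⟨g, hg⟩).trans (one_smul G β).symm

theorem finite_of_finite_orbit {G Ω : Type*} [Group G] [MulAction G Ω] [FaithfulSMul G Ω]
    {N : Subgroup G} [IsPretransitive N Ω] {α : Ω} (h : (orbit N α).Finite) : Finite G := by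
  rw [orbit_eq_univ, Set.finite_univ_iff] at h
  exact Finite.of_injective _ (toPerm_injective (α := G) (β := Ω))

theorem IsPrimitive.isQuasiPreprimitive {G Ω : Type*} [Group G] [MulAction G Ω]
    (h : IsPrimitive G Ω) : IsQuasiPreprimitive G Ω where
  toIsPretransitive := h.1
  isPretransitive_of_normal {N} _ hN := by
    have hinv (g : G) (x y : Ω) (hxy : x ∈ orbit N y) : g • x ∈ orbit N (g • y) := by
      rw [← smul_orbit_eq_orbit_smul]
      exact Set.smul_mem_smul_set hxy
    obtain huniv | htriv := h.2 _ (orbitRel N Ω).iseqv hinv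
    · exact ⟨fun x y ↦ huniv y x⟩
    · exact absurd (Set.eq_univ_of_forall fun x g ↦ htriv _ _ (mem_orbit x g)) hN

theorem bounded_suborbits_iff_stabilizer_finite_general {G Ω : Type*} [Group G] [MulAction G Ω]
    [FaithfulSMul G Ω] [IsQuasiPreprimitive G Ω] (α : Ω) :
    (∃ n : ℕ, ∀ β : Ω, Cardinal.mk (orbit (stabilizer G α) β) ≤ (n : Cardinal)) ↔
    Finite (stabilizer G α) := by
  refine ⟨fun ⟨n, hn⟩ ↦ ?_, fun _ ↦ ⟨Nat.card (stabilizer G α), fun β ↦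
    Cardinal.toENat_le_natCast.1 ((encard_orbit_le_card β).trans_eq (ENat.card_eq_coe_natCard _))⟩⟩
  have hbound : supOrbitLength (stabilizer G α) Ω ≤ n :=
    iSup_le fun β ↦ Cardinal.toENat_le_natCast.2 (hn β)
  obtain ⟨N, _, hN⟩ :=
    exists_normal_commensurable_stabilizer (hbound.trans_lt (ENat.natCast_lt_top n))
  by_cases hfixed : fixedPoints N Ω = Set.univ
  · obtain rfl := eq_bot_of_fixedPoints_eq_univ hfixed
    exact Nat.finite_of_card_ne_zero (relIndex_bot_left (stabilizer G α) ▸ hN.1)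
  · have := IsQuasiPreprimitive.isPretransitive_of_normal hfixed
    have := finite_of_finite_orbit (relIndex_stabilizer_ne_zero_iff.1 hN.2)
    exact Subtype.finite

/-- If `G` is a primitive group of permutations of an infinite set `Ω` and `α ∈ Ω`,
then the cardinalities of the orbits of the point stabilizer `G_α` on `Ω` are
bounded above by a finite cardinal if and only if `G_α` is finite. -/
theorem bounded_suborbits_iff_stabilizer_finite {G Ω : Type*} [Group G] [MulAction G Ω]
    [FaithfulSMul G Ω] [Infinite Ω]
    (hprim : IsPrimitive G Ω) (α : Ω) :
    (∃ n : ℕ, ∀ β : Ω,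
      Cardinal.mk (MulAction.orbit (MulAction.stabilizer G α) β) ≤ (n : Cardinal)) ↔
    Finite (MulAction.stabilizer G α) := by
  have := hprim.isQuasiPreprimitive
  exact bounded_suborbits_iff_stabilizer_finite_general α
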